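/- Let L/K be a totally ramified Galois extension of degree p of complete discrete valued fields of characteristic p, with Galois group G and ramification break s ≥ 1. Then for every integer n ≥ 2 with (s(p−1)/p)·(1 + 1/p + ⋯ + 1/p^{n−3}) > s − 1, the map H^1(G, W_n(O_L)) → H^1(G, O_L) induced by the projection W_n(O_L) → W_1(O_L) = O_L onto the first Witt component is the zero map. -/

import Mathlib

/-!
Common background: complete discretely valued fields, their valuation rings,
residue fields, Galois action on the valuation ring, truncated Witt vector
functoriality, and ramification breaks.
-/

noncomputable section

open scoped Classical

/-- A field equipped with a normalized (i.e. surjective onto `ℤ`) discrete additive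
valuation `v : K → WithTop ℤ` with respect to which it is complete. -/
structure CompleteDiscreteValuation (K : Type*) [Field K] where
  v : K → WithTop ℤ
  eq_top_iff : ∀ x : K, v x = ⊤ ↔ x = 0
  map_one : v 1 = 0
  map_mul : ∀ x y : K, v (x * y) = v x + v y
  min_le_add : ∀ x y : K, min (v x) (v y) ≤ v (x + y)
  surjective : ∀ n : ℤ, ∃ x : K, v x = (n : WithTop ℤ)
  complete : ∀ x : ℕ → K,
      (∀ n : ℕ, ((n : ℤ) : WithTop ℤ) ≤ v (x (n + 1) - x n)) →
      ∃ y : K, ∀ n : ℕ, ((n : ℤ) : WithTop ℤ) ≤ v (y - x n)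

namespace TruncatedWittVector

variable {p n : ℕ} [hp : Fact p.Prime] {R S : Type*} [CommRing R] [CommRing S]

lemma truncateFun_congr_map (f : R →+* S) (a b : WittVector p R)
    (h : WittVector.truncateFun n a = WittVector.truncateFun n b) :
    WittVector.truncateFun n (WittVector.map f a) =
      WittVector.truncateFun n (WittVector.map f b) := by
  ext i
  have hc := congrArg (fun z => TruncatedWittVector.coeff i z) h
  simp only [WittVector.coeff_truncateFun] at hc ⊢
  rw [WittVector.map_coeff, WittVector.map_coeff, hc]

/-- Functoriality of truncated Witt vectors: the ring homomorphism
`W_n(R) → W_n(S)` induced by `f : R → S`, acting componentwise. -/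
def map (f : R →+* S) : TruncatedWittVector p n R →+* TruncatedWittVector p n S where
  toFun x := WittVector.truncateFun n (WittVector.map f x.out)
  map_one' := by
    show WittVector.truncateFun n (WittVector.map f (1 : TruncatedWittVector p n R).out) = 1
    have h : WittVector.truncateFun n ((1 : TruncatedWittVector p n R)).out =
        WittVector.truncateFun n (1 : WittVector p R) := by
      rw [truncateFun_out, WittVector.truncateFun_one]
    have := truncateFun_congr_map f _ _ h
    rw [this, map_one, WittVector.truncateFun_one]
  map_mul' x y := by
    show WittVector.truncateFun n (WittVector.map f (x * y).out) =
      WittVector.truncateFun n (WittVector.map f x.out) *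
        WittVector.truncateFun n (WittVector.map f y.out)
    have h : WittVector.truncateFun n (x * y).out =
        WittVector.truncateFun n (x.out * y.out) := by
      rw [truncateFun_out, WittVector.truncateFun_mul, truncateFun_out, truncateFun_out]
    have := truncateFun_congr_map f _ _ h
    rw [this, map_mul, WittVector.truncateFun_mul]
  map_zero' := by
    show WittVector.truncateFun n (WittVector.map f (0 : TruncatedWittVector p n R).out) = 0
    have h : WittVector.truncateFun n ((0 : TruncatedWittVector p n R)).out =
        WittVector.truncateFun n (0 : WittVector p R) := by
      rw [truncateFun_out, WittVector.truncateFun_zero]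
    have := truncateFun_congr_map f _ _ h
    rw [this, map_zero, WittVector.truncateFun_zero]
  map_add' x y := by
    show WittVector.truncateFun n (WittVector.map f (x + y).out) =
      WittVector.truncateFun n (WittVector.map f x.out) +
        WittVector.truncateFun n (WittVector.map f y.out)
    have h : WittVector.truncateFun n (x + y).out =
        WittVector.truncateFun n (x.out + y.out) := by
      rw [truncateFun_out, WittVector.truncateFun_add, truncateFun_out, truncateFun_out]
    have := truncateFun_congr_map f _ _ h
    rw [this, map_add, WittVector.truncateFun_add]

@[simp]
lemma map_coeff (f : R →+* S) (x : TruncatedWittVector p n R) (i : Fin n) :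
    (map f x).coeff i = f (x.coeff i) := by
  show (WittVector.truncateFun n (WittVector.map f x.out)).coeff i = f (x.coeff i)
  rw [WittVector.coeff_truncateFun, WittVector.map_coeff, coeff_out]

end TruncatedWittVector

namespace CompleteDiscreteValuation

variable {K : Type*} [Field K]

lemma v_zero (w : CompleteDiscreteValuation K) : w.v 0 = ⊤ := (w.eq_top_iff 0).2 rfl

lemma v_neg_one (w : CompleteDiscreteValuation K) : w.v (-1) = 0 := by
  have h := w.map_mul (-1) (-1)
  rw [neg_mul_neg, one_mul, w.map_one] at h
  cases h' : w.v (-1) with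
  | top =>
      exact absurd ((w.eq_top_iff (-1)).1 h') (by norm_num)
  | coe a =>
      rw [h'] at h
      have ha : a + a = 0 := by exact_mod_cast h.symm
      have : a = 0 := by omega
      rw [this]
      rfl

lemma v_neg (w : CompleteDiscreteValuation K) (x : K) : w.v (-x) = w.v x := by
  rw [show -x = -1 * x by ring, w.map_mul, w.v_neg_one, zero_add]

/-- The valuation ring (ring of integers) of a complete discretely valued field. -/
def integers (w : CompleteDiscreteValuation K) : Subring K where
  carrier := {x : K | 0 ≤ w.v x}
  zero_mem' := by simp [Set.mem_setOf_eq, v_zero]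
  one_mem' := by simp [Set.mem_setOf_eq, w.map_one]
  add_mem' {a b} ha hb := le_trans (le_min ha hb) (w.min_le_add a b)
  mul_mem' {a b} ha hb := by
    simp only [Set.mem_setOf_eq] at *
    rw [w.map_mul]
    exact add_nonneg ha hb
  neg_mem' {a} ha := by
    simp only [Set.mem_setOf_eq] at *
    rwa [w.v_neg]

lemma mem_integers_iff (w : CompleteDiscreteValuation K) (x : K) :
    x ∈ w.integers ↔ 0 ≤ w.v x := Iff.rfl

/-- The maximal ideal of the valuation ring. -/
def maxIdeal (w : CompleteDiscreteValuation K) : Ideal w.integers where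
  carrier := {x | 0 < w.v (x : K)}
  zero_mem' := by simp [Set.mem_setOf_eq, v_zero]
  add_mem' {a b} ha hb := lt_of_lt_of_le (lt_min ha hb) (w.min_le_add (a : K) (b : K))
  smul_mem' c x hx := by
    simp only [Set.mem_setOf_eq] at *
    show 0 < w.v ((c : K) * (x : K))
    rw [w.map_mul]
    exact lt_of_lt_of_le hx (le_add_of_nonneg_left c.2)

/-- The residue field of a complete discretely valued field. -/
abbrev residueField (w : CompleteDiscreteValuation K) := w.integers ⧸ w.maxIdeal

section Extension

variable {L : Type*} [Field L] [Algebra K L]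

/-- The ring homomorphism between valuation rings induced by the inclusion `K ⟶ L`,
when the valuation of `L` restricts to `e` times the valuation of `K`. -/
def integerMap (wK : CompleteDiscreteValuation K) (wL : CompleteDiscreteValuation L)
    (e : ℕ) (hcomp : ∀ x : K, wL.v (algebraMap K L x) = e • wK.v x) :
    wK.integers →+* wL.integers where
  toFun x := ⟨algebraMap K L x, by
    rw [mem_integers_iff, hcomp]
    exact nsmul_nonneg x.2 e⟩
  map_one' := Subtype.ext (by simp)
  map_mul' x y := Subtype.ext (by simp)
  map_zero' := Subtype.ext (by simp)
  map_add' x y := Subtype.ext (by simp)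

/-- The induced homomorphism between the residue fields. -/
def residueMap (wK : CompleteDiscreteValuation K) (wL : CompleteDiscreteValuation L)
    (e : ℕ) (he : 0 < e) (hcomp : ∀ x : K, wL.v (algebraMap K L x) = e • wK.v x) :
    wK.residueField →+* wL.residueField :=
  Ideal.Quotient.lift wK.maxIdeal
    ((Ideal.Quotient.mk wL.maxIdeal).comp (integerMap wK wL e hcomp))
    (by
      intro a ha
      rw [RingHom.comp_apply, Ideal.Quotient.eq_zero_iff_mem]
      show 0 < wL.v (algebraMap K L (a : K))
      rw [hcomp]
      calc (0 : WithTop ℤ) < wK.v (a : K) := ha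
        _ = 1 • wK.v (a : K) := (one_nsmul _).symm
        _ ≤ e • wK.v (a : K) := nsmul_le_nsmul_left (le_of_lt ha) he)

/-- The induced extension of residue fields `k_L / k_K` is separable. -/
def ResidueSeparable (wK : CompleteDiscreteValuation K) (wL : CompleteDiscreteValuation L)
    (e : ℕ) (he : 0 < e) (hcomp : ∀ x : K, wL.v (algebraMap K L x) = e • wK.v x) : Prop :=
  letI : Algebra wK.residueField wL.residueField := (residueMap wK wL e he hcomp).toAlgebra
  Algebra.IsSeparable wK.residueField wL.residueField

/-- A `K`-algebra automorphism of `L` (necessarily preserving the valuation, which is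
recorded in the hypothesis `hGal`) restricts to a ring homomorphism of the valuation
ring `O_L`.  This is the Galois action on `O_L`. -/
def galRes (wL : CompleteDiscreteValuation L)
    (hGal : ∀ (σ : L ≃ₐ[K] L) (x : L), wL.v (σ x) = wL.v x) (σ : L ≃ₐ[K] L) :
    wL.integers →+* wL.integers where
  toFun x := ⟨σ x, by rw [mem_integers_iff, hGal]; exact x.2⟩
  map_one' := Subtype.ext (by simp)
  map_mul' x y := Subtype.ext (by simp)
  map_zero' := Subtype.ext (by simp)
  map_add' x y := Subtype.ext (by simp)

/-- The statement that the action of the Galois group of `L/K` on `O_L/m_L^{s+1}`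
is faithful: every nontrivial automorphism moves some integer of `L` by an element
of valuation at most `s`. -/
def FaithfulOnQuotient (K : Type*) [Field K] {L : Type*} [Field L] [Algebra K L]
    (wL : CompleteDiscreteValuation L) (s : ℕ) : Prop :=
  ∀ σ : L ≃ₐ[K] L, σ ≠ 1 → ∃ x : L, 0 ≤ wL.v x ∧ wL.v (σ x - x) ≤ ((s : ℤ) : WithTop ℤ)

/-- `s` is the ramification break (lower ramification jump) of `L/K`: the smallest
nonnegative integer such that the induced action of `Gal(L/K)` on `O_L/m_L^{s+1}`
is faithful. -/
def IsRamificationBreak (K : Type*) [Field K] {L : Type*} [Field L] [Algebra K L]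
    (wL : CompleteDiscreteValuation L) (s : ℕ) : Prop :=
  FaithfulOnQuotient K wL s ∧ ∀ t : ℕ, t < s → ¬ FaithfulOnQuotient K wL t

end Extension

end CompleteDiscreteValuation

open CompleteDiscreteValuation

namespace H1Aux

lemma prod_identity (p : ℕ) [hp : Fact p.Prime] :
    ∃ Q : Polynomial ℤ, (p : Polynomial ℤ) =
      ∏ k ∈ Finset.range (p - 1), (1 - Polynomial.X ^ (k + 1)) +
        Q * ∑ i ∈ Finset.range p, Polynomial.X ^ i := by
  have hp0 : p ≠ 0 := hp.out.ne_zero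
  have hζ := Complex.isPrimitiveRoot_exp p hp0
  set ζ := Complex.exp (2 * Real.pi * Complex.I / p) with hζd
  have h1 : p - 1 + 1 = p := Nat.succ_pred_eq_of_ne_zero hp0
  have h2 := IsPrimitiveRoot.prod_one_sub_pow_eq_order (n := p - 1) (by rw [h1]; exact hζ)
  have h3 : ((p - 1 : ℕ) : ℂ) + 1 = p := by exact_mod_cast h1
  have hd := minpoly.isIntegrallyClosed_dvd (R := ℤ) (hζ.isIntegral hp.out.pos)
    (p := (p : Polynomial ℤ) - ∏ k ∈ Finset.range (p - 1), (1 - Polynomial.X ^ (k + 1)))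
    (by simp [map_prod, h2, h3])
  rw [← Polynomial.cyclotomic_eq_minpoly hζ hp.out.pos, Polynomial.cyclotomic_prime] at hd
  obtain ⟨Q, hQ⟩ := hd
  exact ⟨Q, by rw [mul_comm Q, ← hQ]; ring⟩

/-- In an additive group with endomorphism killed by the norm element. -/
lemma prod_apply {M : Type*} [AddCommGroup M] (p : ℕ) [hp : Fact p.Prime]
    (φ : Module.End ℤ M) (C : M) (hC : ∑ i ∈ Finset.range p, (φ ^ i) C = 0) :
    p • C = (∏ k ∈ Finset.range (p - 1), (1 - Polynomial.X ^ (k + 1)) : Polynomial ℤ).aeval φ C := by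
  obtain ⟨Q, hQ⟩ := prod_identity p
  have h := congrArg (fun P => Polynomial.aeval φ P C) hQ
  simp only [map_natCast, map_add, _root_.map_mul, map_sum, map_pow, Polynomial.aeval_X,
    LinearMap.add_apply, Module.End.mul_apply, LinearMap.sum_apply, add_zero,
    Module.End.natCast_apply] at h
  rw [← map_sum, hC, map_zero, add_zero] at h
  simpa using h

lemma aeval_prod_filt {M : Type*} [AddCommGroup M] (φ : Module.End ℤ M) (D : ℕ → Set M) (t : ℕ)
    (hD : ∀ a k x, x ∈ D a → x - (φ ^ k) x ∈ D (a + t)) (N : ℕ) (a : ℕ) (x : M) (hx : x ∈ D a) :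
    (∏ k ∈ Finset.range N, (1 - Polynomial.X ^ (k + 1)) : Polynomial ℤ).aeval φ x
      ∈ D (a + N * t) := by
  induction N with
  | zero => simpa using hx
  | succ N ih =>
    rw [Finset.prod_range_succ, mul_comm (Finset.prod _ _), _root_.map_mul, Module.End.mul_apply]
    have := hD _ (N + 1) _ ih
    rw [show a + (N + 1) * t = a + N * t + t by ring]
    simpa using this

variable {p n : ℕ} [hp : Fact p.Prime] {R : Type*} [CommRing R]

lemma sub_coeff_mem (I : Ideal R) (k : ℕ) (hk : k ≤ n) (X Y : TruncatedWittVector p n R)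
    (h : ∀ i : Fin n, i.1 < k → X.coeff i - Y.coeff i ∈ I) :
    ∀ i : Fin n, i.1 < k → (X - Y).coeff i ∈ I := by
  intro i hi
  let q := Ideal.Quotient.mk I
  have key : TruncatedWittVector.truncate hk (TruncatedWittVector.map q (X - Y)) = 0 := by
    rw [map_sub, map_sub, sub_eq_zero]
    ext j
    rw [TruncatedWittVector.coeff_truncate, TruncatedWittVector.coeff_truncate,
      TruncatedWittVector.map_coeff, TruncatedWittVector.map_coeff]
    exact Ideal.Quotient.eq.2 (h _ (by simp))
  have := congrArg (TruncatedWittVector.coeff ⟨i, hi⟩) key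
  rw [TruncatedWittVector.coeff_truncate, TruncatedWittVector.map_coeff,
    TruncatedWittVector.coeff_zero] at this
  exact Ideal.Quotient.eq_zero_iff_mem.1 this

lemma p_smul_coeff [CharP R p] (X : TruncatedWittVector p n R) (i : ℕ) (hi : i + 1 < n) :
    (p • X).coeff ⟨i + 1, hi⟩ = X.coeff ⟨i, by omega⟩ ^ p := by
  have : p • X = WittVector.truncateFun n (X.out * (p : WittVector p R)) := by
    rw [WittVector.truncateFun_mul, WittVector.truncateFun_natCast,
      TruncatedWittVector.truncateFun_out, nsmul_eq_mul, mul_comm]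
  rw [this, WittVector.coeff_truncateFun]
  simp only [WittVector.mul_charP_coeff_succ]
  rw [← TruncatedWittVector.coeff_out]

/-- The main Witt vector estimate, for an abstract decreasing filtration by ideals. -/
lemma witt_main [CharP R p] (I : ℕ → Ideal R) (hI0 : I 0 = ⊤)
    (t : ℕ) (f : R →+* R)
    (hf : ∀ a k x, x ∈ I a → x - (f ^ k) x ∈ I (a + t))
    (hpow : ∀ x d, x ^ p ∈ I (p * t - d) → x ∈ I (t - d / p))
    (C : TruncatedWittVector p n R)
    (hC : ∑ i ∈ Finset.range p, TruncatedWittVector.map (f ^ i) C = 0)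
    (r : ℕ) (hr : r < n) : ∀ i : Fin n, i.1 < n - r → C.coeff i ∈ I (t - t / p ^ r) := by
  let φ : Module.End ℤ (TruncatedWittVector p n R) :=
    ((TruncatedWittVector.map f : _ →+* _).toAddMonoidHom).toIntLinearMap
  have hφ : ∀ k X, (φ ^ k) X = TruncatedWittVector.map (f ^ k) X := by
    intro k
    induction k with
    | zero => intro X; ext i; simp
    | succ k ih =>
      intro X
      rw [pow_succ', Module.End.mul_apply, ih]
      ext i
      change (TruncatedWittVector.map f (TruncatedWittVector.map (f ^ k) X)).coeff i = _
      rw [TruncatedWittVector.map_coeff, TruncatedWittVector.map_coeff,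
        TruncatedWittVector.map_coeff, pow_succ']
      rfl
  have hpC := prod_apply p φ C (by simpa [hφ] using hC)
  induction r with
  | zero => intro i _; simp [hI0]
  | succ r ih =>
    intro i hi
    have ih := ih (by omega)
    have h := aeval_prod_filt φ
      (fun a => {X | ∀ i : Fin n, i.1 < n - r → X.coeff i ∈ I a}) t
      (by
        intro a k X hX
        apply sub_coeff_mem (I (a + t)) (n - r) (by omega)
        intro i hi
        rw [hφ, TruncatedWittVector.map_coeff]
        exact hf a k _ (hX i hi)) (p - 1) (t - t / p ^ r) C ih
    rw [← hpC] at h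
    have h' := h ⟨i.1 + 1, by omega⟩ (by simp; omega)
    rw [p_smul_coeff] at h'
    have e : t - t / p ^ r + (p - 1) * t = p * t - t / p ^ r := by
      have h1 : t / p ^ r ≤ t := Nat.div_le_self _ _
      obtain ⟨m, hm⟩ : ∃ m, p = m + 1 := ⟨p - 1, by have := hp.out.pos; omega⟩
      rw [hm, Nat.add_sub_cancel, Nat.succ_mul]
      rw [hm] at h1
      omega
    rw [e] at h'
    have := hpow _ _ h'
    rwa [Nat.div_div_eq_div_mul, ← pow_succ] at this

end H1Aux

namespace H1Aux

/-- The additive valuation attached to a complete discrete valuation. -/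
def toAV {K : Type*} [Field K] (w : CompleteDiscreteValuation K) : AddValuation K (WithTop ℤ) :=
  AddValuation.of w.v w.v_zero w.map_one w.min_le_add w.map_mul

lemma toAV_apply {K : Type*} [Field K] (w : CompleteDiscreteValuation K) (x : K) :
    w.v x = toAV w x := rfl

variable {p : ℕ} [hp : Fact p.Prime] {K L : Type*} [Field K] [Field L] [Algebra K L]
    (wK : CompleteDiscreteValuation K) (wL : CompleteDiscreteValuation L)

lemma sum_val_le
    (htot : ∀ x : K, wL.v (algebraMap K L x) = p • wK.v x)
    (e : Fin p → L) (he : ∀ i, wL.v (e i) = (((i : ℕ) : ℤ) : WithTop ℤ)) (k : Fin p → K)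
    (i : Fin p) : wL.v (∑ j, algebraMap K L (k j) * e j) ≤ wL.v (algebraMap K L (k i) * e i) := by
  set f : Fin p → L := fun j => algebraMap K L (k j) * e j with hf
  obtain ⟨i0, -, hi0⟩ := Finset.exists_min_image Finset.univ (fun j => wL.v (f j))
    ⟨i, Finset.mem_univ i⟩
  have htop : p • (⊤ : WithTop ℤ) = ⊤ := by
    obtain ⟨m, hm⟩ : ∃ m, p = m + 1 := ⟨p - 1, by have := hp.out.pos; omega⟩
    rw [show p • (⊤ : WithTop ℤ) = (m + 1) • ⊤ by rw [hm], succ_nsmul]; simp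
  by_cases h0 : wL.v (f i0) = ⊤
  · have : wL.v (f i) = ⊤ := top_le_iff.1 (h0 ▸ hi0 i (Finset.mem_univ i))
    change _ ≤ wL.v (f i)
    rw [this]; exact le_top
  have hlt : ∀ j, j ≠ i0 → wL.v (f i0) < wL.v (f j) := by
    intro j hj
    refine lt_of_le_of_ne (hi0 j (Finset.mem_univ j)) ?_
    intro heq
    apply hj
    have h1 : ∀ j, wL.v (f j) = p • wK.v (k j) + (((j : ℕ) : ℤ) : WithTop ℤ) := by
      intro j; rw [hf]; simp only [wL.map_mul, htot, he]
    have h0' : wL.v (f j) ≠ ⊤ := heq ▸ h0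
    rw [h1, h1] at heq
    rw [h1] at h0 h0'
    cases ha : wK.v (k i0) with
    | top =>
      exfalso; apply h0; rw [ha, htop]; simp
    | coe a =>
      cases hb : wK.v (k j) with
      | top =>
        exfalso; apply h0'; rw [hb, htop]; simp
      | coe b =>
        rw [ha, hb] at heq
        have h2 : (p : ℤ) * a + (i0 : ℕ) = p * b + (j : ℕ) := by
          have : p • a + ((i0 : ℕ) : ℤ) = p • b + ((j : ℕ) : ℤ) := by exact_mod_cast heq
          simpa using this
        have h3 := congrArg (fun z => z % (p : ℤ)) h2
        simp only [Int.mul_add_emod_self_left] at h3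
        rw [Int.emod_eq_of_lt (by positivity) (by exact_mod_cast i0.2),
          Int.emod_eq_of_lt (by positivity) (by exact_mod_cast j.2)] at h3
        exact Fin.ext (by exact_mod_cast h3.symm)
  have hsum : wL.v (∑ j, f j) = wL.v (f i0) := by
    rw [← Finset.add_sum_erase _ _ (Finset.mem_univ i0)]
    simp only [toAV_apply] at *
    apply AddValuation.map_add_eq_of_lt_left
    apply AddValuation.map_lt_sum _ h0
    intro j hj
    exact hlt j (Finset.ne_of_mem_erase hj)
  change wL.v (∑ j, f j) ≤ wL.v (f i)
  rw [hsum]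
  exact hi0 i (Finset.mem_univ i)

lemma exists_expansion [FiniteDimensional K L] (hdeg : Module.finrank K L = p)
    (htot : ∀ x : K, wL.v (algebraMap K L x) = p • wK.v x)
    (π : L) (hπ : wL.v π = ((1 : ℤ) : WithTop ℤ)) (y : L) :
    ∃ k : Fin p → K, y = ∑ j, algebraMap K L (k j) * π ^ (j : ℕ) := by
  have he : ∀ i : Fin p, wL.v (π ^ (i : ℕ)) = (((i : ℕ) : ℤ) : WithTop ℤ) := by
    intro i
    rw [toAV_apply, AddValuation.map_pow, ← toAV_apply, hπ]
    norm_cast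
    simp
  have hli : LinearIndependent K (fun i : Fin p => π ^ (i : ℕ)) := by
    rw [Fintype.linearIndependent_iff]
    intro g hg i
    have h := sum_val_le wK wL htot _ he g i
    simp only [Algebra.smul_def] at hg
    rw [hg, wL.v_zero, top_le_iff, wL.eq_top_iff, mul_eq_zero] at h
    rcases h with h | h
    · simpa using h
    · exfalso
      have := he i
      rw [h, wL.v_zero] at this
      exact absurd this (by simp)
  haveI : Nonempty (Fin p) := ⟨⟨0, hp.out.pos⟩⟩
  let b := basisOfLinearIndependentOfCardEqFinrank hli (by simp [hdeg])
  refine ⟨fun j => b.repr y j, ?_⟩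
  conv_lhs => rw [← b.sum_repr y]
  simp [b, Algebra.smul_def]

end H1Aux

namespace H1Aux

variable {p : ℕ} [hp : Fact p.Prime] {K L : Type*} [Field K] [Field L] [Algebra K L]
    (wK : CompleteDiscreteValuation K) (wL : CompleteDiscreteValuation L)

lemma val_pow (w : CompleteDiscreteValuation L) (x : L) (n : ℕ) : w.v (x ^ n) = n • w.v x :=
  AddValuation.map_pow (toAV w) x n

lemma val_sum (w : CompleteDiscreteValuation L) {ι : Type*} (S : Finset ι) (f : ι → L)
    (c : WithTop ℤ) (h : ∀ i ∈ S, c ≤ w.v (f i)) : c ≤ w.v (∑ i ∈ S, f i) :=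
  AddValuation.map_le_sum (toAV w) h

lemma val_add (w : CompleteDiscreteValuation L) (x y : L)
    (c : WithTop ℤ) (hx : c ≤ w.v x) (hy : c ≤ w.v y) : c ≤ w.v (x + y) :=
  AddValuation.map_le_add (toAV w) hx hy

lemma val_geom (w : CompleteDiscreteValuation L) (u : L) (hu : w.v u = 0) (i : ℕ) :
    0 ≤ w.v (∑ j ∈ Finset.range i, u ^ j) := by
  apply val_sum
  intro j _
  rw [val_pow, hu, nsmul_zero]

lemma val_pi_pow (w : CompleteDiscreteValuation L) (π : L) (hπ : w.v π = ((1 : ℤ) : WithTop ℤ))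
    (i : ℕ) : w.v (π ^ i) = ((i : ℤ) : WithTop ℤ) := by
  rw [val_pow, hπ]
  norm_cast
  simp

lemma le_of_add_one (a b : WithTop ℤ) (h : a + ((1 : ℤ) : WithTop ℤ) ≤ b + ((1 : ℤ) : WithTop ℤ)) :
    a ≤ b := WithTop.le_of_add_le_add_right WithTop.coe_ne_top h

lemma succ_le (a : ℤ) (b : WithTop ℤ) (h : (a : WithTop ℤ) < b) :
    ((a + 1 : ℤ) : WithTop ℤ) ≤ b := by
  cases b with
  | top => exact le_top
  | coe b =>
    have : a < b := by exact_mod_cast h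
    exact_mod_cast this

/-- Lower bound for `g y - y` with `y` arbitrary. -/
lemma val_shift [FiniteDimensional K L] (hdeg : Module.finrank K L = p)
    (htot : ∀ x : K, wL.v (algebraMap K L x) = p • wK.v x)
    (π : L) (hπ : wL.v π = ((1 : ℤ) : WithTop ℤ)) (g : L ≃ₐ[K] L) (u : L) (hu0 : wL.v u = 0)
    (hu : g π = u * π) (t : ℕ) (ht : ((t : ℤ) : WithTop ℤ) ≤ wL.v (u - 1)) (y : L) :
    wL.v y + ((t : ℤ) : WithTop ℤ) ≤ wL.v (g y - y) := by
  obtain ⟨k, hk⟩ := exists_expansion wK wL hdeg htot π hπ y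
  have h1 : g y - y = ∑ j, algebraMap K L (k j) * π ^ (j : ℕ) *
      ((u - 1) * ∑ i ∈ Finset.range j, u ^ i) := by
    rw [hk, map_sum, ← Finset.sum_sub_distrib]
    apply Finset.sum_congr rfl
    intro j _
    rw [mul_geom_sum, _root_.map_mul, map_pow, hu, AlgEquiv.commutes, mul_pow]
    ring
  rw [h1]
  apply val_sum
  intro j _
  rw [wL.map_mul, wL.map_mul (u - 1)]
  have h2 := sum_val_le wK wL htot (fun j => π ^ (j : ℕ)) (fun j => val_pi_pow wL π hπ j) k j
  rw [← hk] at h2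
  refine add_le_add h2 ?_
  calc _ ≤ wL.v (u - 1) + 0 := by simpa using ht
    _ ≤ _ := by gcongr; exact val_geom wL u hu0 _

lemma exists_unit (hGal : ∀ (σ : L ≃ₐ[K] L) (x : L), wL.v (σ x) = wL.v x)
    (π : L) (hπ : wL.v π = ((1 : ℤ) : WithTop ℤ)) (g : L ≃ₐ[K] L) :
    ∃ u : L, wL.v u = 0 ∧ g π = u * π := by
  have h0 : π ≠ 0 := by
    rintro rfl; rw [wL.v_zero] at hπ; simp at hπ
  refine ⟨g π / π, ?_, by field_simp⟩
  have h1 : wL.v (g π / π) + wL.v π = wL.v π := by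
    rw [← wL.map_mul, div_mul_cancel₀ _ h0, hGal]
  rw [hπ] at h1
  cases h : wL.v (g π / π) with
  | top => rw [h] at h1; simp at h1
  | coe a =>
    rw [h] at h1
    have : a + 1 = 1 := by exact_mod_cast h1
    have : a = 0 := by omega
    rw [this]; rfl

/-- The structure of the ramification. The usual break is `t = s - 1`. -/
lemma ram [CharP K p] [IsGalois K L] [FiniteDimensional K L] (hdeg : Module.finrank K L = p)
    (htot : ∀ x : K, wL.v (algebraMap K L x) = p • wK.v x)
    (hGal : ∀ (σ : L ≃ₐ[K] L) (x : L), wL.v (σ x) = wL.v x)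
    (s : ℕ) (hs : IsRamificationBreak K wL s) (hs1 : 1 ≤ s) :
    ∃ (σ : L ≃ₐ[K] L) (t : ℕ) (π u : L), s = t + 1 ∧ 1 ≤ t ∧ σ ^ p = 1 ∧
      (∀ (k : ℕ) (y : L), wL.v y + ((t : ℤ) : WithTop ℤ) ≤ wL.v ((σ ^ k) y - y)) ∧
      wL.v π = ((1 : ℤ) : WithTop ℤ) ∧ wL.v u = 0 ∧ σ π = u * π ∧
      wL.v (u - 1) = ((t : ℤ) : WithTop ℤ) := by
  haveI : CharP L p := charP_of_injective_algebraMap (algebraMap K L).injective p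
  obtain ⟨t, rfl⟩ : ∃ t, s = t + 1 := ⟨s - 1, by omega⟩
  have h1 := hs.2 t (by omega)
  unfold FaithfulOnQuotient at h1
  push Not at h1
  obtain ⟨σ, hσ1, hσ⟩ := h1
  obtain ⟨π, hπ⟩ := wL.surjective 1
  have hcard : Nat.card (L ≃ₐ[K] L) = p := by rw [IsGalois.card_aut_eq_finrank, hdeg]
  have hσp : σ ^ p = 1 := by rw [← hcard]; exact pow_card_eq_one'
  have hO : ∀ (k : ℕ) (x : L), 0 ≤ wL.v x → (((t + 1 : ℤ)) : WithTop ℤ) ≤ wL.v ((σ ^ k) x - x) := by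
    intro k
    induction k with
    | zero => intro x _; simp [wL.v_zero]
    | succ k ih =>
      intro x hx
      have : (σ ^ (k + 1)) x - x = σ ((σ ^ k) x - x) + (σ x - x) := by
        rw [pow_succ']; simp
      rw [this]
      apply val_add
      · rw [hGal]; exact ih x hx
      · exact succ_le _ _ (hσ x hx)
  have hπ0 : 0 ≤ wL.v π := by rw [hπ]; exact_mod_cast zero_le_one
  have hlow : ∀ (k : ℕ) (u : L), wL.v u = 0 → (σ ^ k) π = u * π →
      ((t : ℤ) : WithTop ℤ) ≤ wL.v (u - 1) := by
    intro k u hu0 hu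
    have h2 := hO k π hπ0
    rw [hu, show u * π - π = (u - 1) * π by ring, wL.map_mul, hπ] at h2
    apply le_of_add_one
    exact_mod_cast h2
  obtain ⟨u, hu0, hu⟩ := exists_unit wL hGal π hπ σ
  have hut : wL.v (u - 1) = ((t : ℤ) : WithTop ℤ) := by
    apply le_antisymm
    · obtain ⟨x, hx0, hx⟩ := hs.1 σ hσ1
      obtain ⟨k, hk⟩ := exists_expansion wK wL hdeg htot π hπ x
      have hk0 : ∀ j, 0 ≤ wL.v (algebraMap K L (k j)) := by
        intro j
        have h2 := sum_val_le wK wL htot (fun j => π ^ (j : ℕ)) (fun j => val_pi_pow wL π hπ j) k j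
        rw [← hk, wL.map_mul, val_pi_pow wL π hπ, htot] at h2
        have h3 := hx0.trans h2
        rw [htot]
        apply nsmul_nonneg
        cases ha : wK.v (k j) with
        | top => exact le_top
        | coe a =>
          rw [ha] at h3
          have h4 : 0 ≤ p • a + ((j : ℕ) : ℤ) := by exact_mod_cast h3
          have h5 : ((j : ℕ) : ℤ) < p := by exact_mod_cast j.2
          rw [nsmul_eq_mul] at h4
          have h6 : 0 ≤ a := by
            by_contra hneg
            have : a ≤ -1 := by omega
            nlinarith
          exact_mod_cast h6
      have h1 : σ x - x = ∑ j, algebraMap K L (k j) * π ^ ((j : ℕ) - 1) *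
          ((u - 1) * π) * ∑ i ∈ Finset.range j, u ^ i := by
        rw [hk, map_sum, ← Finset.sum_sub_distrib]
        apply Finset.sum_congr rfl
        intro j _
        have e : (u - 1) * ∑ i ∈ Finset.range j, u ^ i = u ^ (j : ℕ) - 1 := mul_geom_sum _ _
        rw [_root_.map_mul, map_pow, hu, AlgEquiv.commutes, mul_pow]
        rcases Nat.eq_zero_or_pos (j : ℕ) with h | h
        · simp [h]
        · have hp1 : π ^ (j : ℕ) = π ^ ((j : ℕ) - 1) * π := by
            rw [← pow_succ, Nat.sub_add_cancel h]
          rw [hp1]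
          linear_combination (-(algebraMap K L (k j)) * π ^ ((j : ℕ) - 1) * π) * e
      have h2 : wL.v ((u - 1) * π) ≤ wL.v (σ x - x) := by
        rw [h1]
        apply val_sum
        intro j _
        rw [wL.map_mul _ (∑ i ∈ _, u ^ i), wL.map_mul _ ((u - 1) * π),
          wL.map_mul (algebraMap K L (k j))]
        have h3 : 0 ≤ wL.v (π ^ ((j : ℕ) - 1)) := by
          rw [val_pow]; exact nsmul_nonneg hπ0 _
        calc wL.v ((u - 1) * π) = 0 + 0 + wL.v ((u - 1) * π) + 0 := by simp
          _ ≤ _ := by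
            gcongr
            · exact hk0 j
            · exact val_geom wL u hu0 _
      have h3 := h2.trans hx
      rw [wL.map_mul, hπ] at h3
      apply le_of_add_one
      exact_mod_cast h3
    · exact hlow 1 u hu0 (by simpa using hu)
  have hu1 : ((1 : ℤ) : WithTop ℤ) ≤ wL.v (u - 1) := by
    have hres : ∀ x : L, 0 ≤ wL.v x → ((1 : ℤ) : WithTop ℤ) ≤ wL.v (σ x - x) := by
      intro x hx
      refine le_trans ?_ (hO 1 x hx)
      exact_mod_cast (by omega : (1 : ℤ) ≤ t + 1)
    have hind : ∀ j : ℕ, ((2 : ℤ) : WithTop ℤ) ≤ wL.v ((σ ^ j) π - u ^ j * π) := by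
      intro j
      induction j with
      | zero => simp [wL.v_zero]
      | succ j ih =>
        have : (σ ^ (j + 1)) π - u ^ (j + 1) * π =
            σ ((σ ^ j) π - u ^ j * π) + (σ (u ^ j) - u ^ j) * (u * π) := by
          rw [pow_succ' σ, AlgEquiv.mul_apply, map_sub, _root_.map_mul, hu]
          ring
        rw [this]
        apply val_add
        · rw [hGal]; exact ih
        · rw [wL.map_mul, wL.map_mul, hu0, hπ, zero_add]
          have h2 := hres (u ^ j) (by rw [val_pow, hu0, nsmul_zero])
          calc ((2 : ℤ) : WithTop ℤ) = ((1 : ℤ) : WithTop ℤ) + ((1 : ℤ) : WithTop ℤ) := by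
                norm_cast
            _ ≤ _ := by gcongr
    have h2 := hind p
    have h3 : (σ ^ p) π - u ^ p * π = -((u - 1) ^ p * π) := by
      rw [hσp, sub_pow_char]; simp; ring
    rw [h3, wL.v_neg, wL.map_mul, hπ, val_pow, hut] at h2
    have h4 : (2 : ℤ) ≤ p • (t : ℤ) + 1 := by exact_mod_cast h2
    rw [hut]
    rcases Nat.eq_zero_or_pos t with h | h
    · simp [h] at h4
    · exact_mod_cast h
  have ht1 : 1 ≤ t := by
    rw [hut] at hu1
    exact_mod_cast hu1
  refine ⟨σ, t, π, u, rfl, ht1, hσp, ?_, hπ, hu0, hu, hut⟩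
  intro k y
  obtain ⟨w, hw0, hw⟩ := exists_unit wL hGal π hπ (σ ^ k)
  exact val_shift wK wL hdeg htot π hπ _ w hw0 hw t (hlow k w hw0 hw) y

end H1Aux

namespace H1Aux

variable {p : ℕ} [hp : Fact p.Prime] {K L : Type*} [Field K] [Field L] [Algebra K L]
    (wK : CompleteDiscreteValuation K) (wL : CompleteDiscreteValuation L)

lemma val_natCast_nonneg (j : ℕ) : 0 ≤ wL.v (j : L) := by
  have : (j : L) = ∑ _i ∈ Finset.range j, (1 : L) := by simp
  rw [this]
  apply val_sum
  intro _ _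
  rw [wL.map_one]

lemma val_natCast [CharP L p] (j : ℕ) (h0 : 0 < j) (hj : j < p) : wL.v (j : L) = 0 := by
  have hc : Nat.Coprime j p := by
    rw [Nat.coprime_comm]
    exact (Nat.Prime.coprime_iff_not_dvd hp.out).2 (Nat.not_dvd_of_pos_of_lt h0 hj)
  obtain ⟨m, -, hm⟩ := Nat.exists_mul_mod_eq_one_of_coprime hc hp.out.one_lt
  have h1 : (j : L) * (m : L) = 1 := by
    rw [← Nat.cast_mul, CharP.cast_eq_mod L p, hm, Nat.cast_one]
  have h2 := wL.map_mul (j : L) (m : L)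
  rw [h1, wL.map_one] at h2
  apply le_antisymm _ (val_natCast_nonneg wL j)
  calc wL.v (j : L) = wL.v (j : L) + 0 := by simp
    _ ≤ wL.v (j : L) + wL.v (m : L) := by gcongr; exact val_natCast_nonneg wL m
    _ = 0 := h2.symm

lemma descent [CharP L p] [FiniteDimensional K L] (hdeg : Module.finrank K L = p)
    (htot : ∀ x : K, wL.v (algebraMap K L x) = p • wK.v x)
    (σ : L ≃ₐ[K] L) (t : ℕ) (ht1 : 1 ≤ t) (π u : L) (hπ : wL.v π = ((1 : ℤ) : WithTop ℤ))
    (hu0 : wL.v u = 0) (hu : σ π = u * π) (hut : wL.v (u - 1) = ((t : ℤ) : WithTop ℤ))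
    (b : L) (hb : ((t : ℤ) : WithTop ℤ) ≤ wL.v (σ b - b)) :
    ∃ k : K, 0 ≤ wL.v (b - algebraMap K L k) := by
  obtain ⟨k, hk⟩ := exists_expansion wK wL hdeg htot π hπ b
  let G : ℕ → L := fun j => ∑ i ∈ Finset.range j, u ^ i
  have hGe : ∀ j, (u - 1) * G j = u ^ j - 1 := fun j => mul_geom_sum _ _
  have hG : ∀ j, 0 < j → j < p → wL.v (G j) = 0 := by
    intro j h0 hj
    have h1 : G j = (j : L) + ∑ i ∈ Finset.range j, (u ^ i - 1) := by simp [G]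
    have h2 : ((1 : ℤ) : WithTop ℤ) ≤ wL.v (∑ i ∈ Finset.range j, (u ^ i - 1)) := by
      apply val_sum
      intro i _
      rw [← hGe, wL.map_mul, hut]
      calc ((1 : ℤ) : WithTop ℤ) ≤ ((t : ℤ) : WithTop ℤ) + 0 := by
            rw [add_zero]; exact_mod_cast ht1
        _ ≤ _ := by gcongr; exact val_geom wL u hu0 i
    have h3 := val_natCast (p := p) wL j h0 hj
    rw [h1]
    have : wL.v ((j : L) + ∑ i ∈ Finset.range j, (u ^ i - 1)) = wL.v (j : L) := by
      apply AddValuation.map_add_eq_of_lt_left (toAV wL)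
      change wL.v _ < wL.v _
      rw [h3]
      exact lt_of_lt_of_le (by exact_mod_cast zero_lt_one) h2
    rw [this, h3]
  let z : Fin p := ⟨0, hp.out.pos⟩
  let k' : Fin p → K := fun j => if j = z then 0 else k j
  let e : Fin p → L := fun j => if j = z then 1 else π ^ (j : ℕ) * G j
  have hpos : ∀ j : Fin p, j ≠ z → 0 < (j : ℕ) := by
    intro j hj
    rcases Nat.eq_zero_or_pos (j : ℕ) with h | h
    · exact absurd (Fin.ext h) hj
    · exact h
  have he : ∀ j, wL.v (e j) = (((j : ℕ) : ℤ) : WithTop ℤ) := by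
    intro j
    by_cases hj : j = z
    · simp only [e, hj, if_true, wL.map_one, z]; simp
    · simp only [e, hj, if_false, wL.map_mul, val_pi_pow wL π hπ, hG j (hpos j hj) j.2, add_zero]
  have h1 : σ b - b = (u - 1) * ∑ j, algebraMap K L (k' j) * e j := by
    rw [hk, map_sum, ← Finset.sum_sub_distrib, Finset.mul_sum]
    apply Finset.sum_congr rfl
    intro j _
    rw [_root_.map_mul, map_pow, hu, AlgEquiv.commutes, mul_pow]
    by_cases hj : j = z
    · simp [k', hj, z]
    · simp only [k', e, hj, if_false]
      linear_combination (-(algebraMap K L (k j)) * π ^ (j : ℕ)) * hGe j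
  have h2 : 0 ≤ wL.v (∑ j, algebraMap K L (k' j) * e j) := by
    rw [h1, wL.map_mul, hut] at hb
    refine WithTop.le_of_add_le_add_left (WithTop.coe_ne_top (a := (t : ℤ))) ?_
    rw [add_zero]; exact hb
  refine ⟨k z, ?_⟩
  have h3 : b - algebraMap K L (k z) = ∑ j, algebraMap K L (k' j) * π ^ (j : ℕ) := by
    rw [hk, ← Finset.add_sum_erase _ _ (Finset.mem_univ z),
      ← Finset.add_sum_erase Finset.univ (fun j => algebraMap K L (k' j) * π ^ (j : ℕ))
        (Finset.mem_univ z)]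
    have : ∑ j ∈ Finset.univ.erase z, algebraMap K L (k' j) * π ^ (j : ℕ) =
        ∑ j ∈ Finset.univ.erase z, algebraMap K L (k j) * π ^ (j : ℕ) := by
      apply Finset.sum_congr rfl
      intro j hj
      simp [k', Finset.ne_of_mem_erase hj]
    rw [this]
    simp [k', z]
  rw [h3]
  apply val_sum
  intro j _
  have h4 := h2.trans (sum_val_le wK wL htot e he k' j)
  rw [wL.map_mul, he] at h4
  rw [wL.map_mul, val_pi_pow wL π hπ]
  exact h4

/-- Additive Hilbert 90. -/
lemma hilbert90 [IsGalois K L] [FiniteDimensional K L] (c : (L ≃ₐ[K] L) → L)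
    (hc : ∀ σ τ, c (σ * τ) = c σ + σ (c τ)) : ∃ b : L, ∀ σ, c σ = σ b - b := by
  obtain ⟨y, hy⟩ := Algebra.trace_surjective K L 1
  have hy' : ∑ τ : L ≃ₐ[K] L, τ y = 1 := by
    rw [← trace_eq_sum_automorphisms, hy, _root_.map_one]
  refine ⟨-∑ τ, c τ * τ y, fun σ => ?_⟩
  have h1 : ∑ τ : L ≃ₐ[K] L, c τ * τ y = ∑ τ, c (σ * τ) * (σ * τ) y :=
    (Fintype.sum_equiv (Equiv.mulLeft σ) _ _ (fun _ => rfl)).symm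
  have h2 : ∑ τ : L ≃ₐ[K] L, (σ * τ) y = 1 := by
    rw [← hy']
    exact Fintype.sum_equiv (Equiv.mulLeft σ) _ _ (fun _ => rfl)
  rw [map_neg, map_sum]
  have h3 : ∑ τ : L ≃ₐ[K] L, c τ * τ y = c σ + ∑ τ, σ (c τ * τ y) := by
    rw [h1]
    have : c σ = ∑ τ : L ≃ₐ[K] L, c σ * (σ * τ) y := by rw [← Finset.mul_sum, h2, mul_one]
    conv_rhs => rw [this]
    rw [← Finset.sum_add_distrib]
    apply Finset.sum_congr rfl
    intro τ _
    rw [hc, _root_.map_mul, AlgEquiv.mul_apply]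
    ring
  rw [h3]
  ring

/-- The ideals of the valuation filtration. -/
def filt (a : ℕ) : Ideal wL.integers where
  carrier := {x | ((a : ℤ) : WithTop ℤ) ≤ wL.v (x : L)}
  zero_mem' := by
    change _ ≤ wL.v (((0 : wL.integers)) : L)
    rw [Subring.coe_zero, wL.v_zero]; exact le_top
  add_mem' {x y} hx hy := val_add wL (x : L) (y : L) _ hx hy
  smul_mem' c x hx := by
    change _ ≤ wL.v ((c : L) * (x : L))
    rw [wL.map_mul]
    exact le_trans hx (le_add_of_nonneg_left c.2)

lemma mem_filt (a : ℕ) (x : wL.integers) :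
    x ∈ filt wL a ↔ ((a : ℤ) : WithTop ℤ) ≤ wL.v (x : L) := Iff.rfl

lemma filt_pow (t : ℕ) (x : wL.integers) (d : ℕ) (h : x ^ p ∈ filt wL (p * t - d)) :
    x ∈ filt wL (t - d / p) := by
  rw [mem_filt] at *
  have hx : 0 ≤ wL.v (x : L) := x.2
  rw [Subring.coe_pow, val_pow] at h
  cases ha : wL.v (x : L) with
  | top => exact le_top
  | coe a =>
    rw [ha] at h hx
    have ha0 : 0 ≤ a := by exact_mod_cast hx
    lift a to ℕ using ha0
    have h1 : p * t - d ≤ p * a := by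
      have : (((p * t - d : ℕ)) : ℤ) ≤ p • (a : ℤ) := by exact_mod_cast h
      rw [nsmul_eq_mul] at this
      exact_mod_cast this
    have h2 : t - a ≤ d / p := by
      rw [Nat.le_div_iff_mul_le hp.out.pos, mul_comm, Nat.mul_sub]
      omega
    have h3 : t - d / p ≤ a := by omega
    exact_mod_cast h3

lemma galRes_pow (hGal : ∀ (σ : L ≃ₐ[K] L) (x : L), wL.v (σ x) = wL.v x) (σ : L ≃ₐ[K] L) (k : ℕ) :
    wL.galRes hGal σ ^ k = wL.galRes hGal (σ ^ k) := by
  induction k with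
  | zero => ext x; simp [galRes]
  | succ k ih =>
    rw [pow_succ', ih]
    ext x
    rw [pow_succ']
    rfl

lemma bound (s n : ℕ)
    (hbig : (s : ℚ) * ((p : ℚ) - 1) / (p : ℚ) *
        (∑ j ∈ Finset.range (n - 2), ((1 : ℚ) / (p : ℚ)) ^ j) > (s : ℚ) - 1) : s < p ^ (n - 2) := by
  have hp0 : (0 : ℚ) < p := by exact_mod_cast hp.out.pos
  have h1 := mul_neg_geom_sum ((1 : ℚ) / p) (n - 2)
  have h2 : (s : ℚ) * ((p : ℚ) - 1) / (p : ℚ) *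
      (∑ j ∈ Finset.range (n - 2), ((1 : ℚ) / (p : ℚ)) ^ j) = s * (1 - (1 / (p : ℚ)) ^ (n - 2)) := by
    rw [← h1]; field_simp
  rw [h2, div_pow, one_pow] at hbig
  have h3 : (s : ℚ) * (1 / (p : ℚ) ^ (n - 2)) < 1 := by linarith
  rw [mul_one_div, div_lt_one (by positivity)] at h3
  exact_mod_cast h3

end H1Aux


/-- Let `L/K` be a totally ramified Galois extension of degree `p` of
complete discrete valued fields of characteristic `p`, with ramification break `s ≥ 1`.
For `n ≥ 2` with `(s (p-1)/p) (1 + 1/p + ⋯ + 1/p^{n-3}) > s - 1`, the map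
`H¹(G, Wₙ(O_L)) → H¹(G, O_L)` induced by projection to the first Witt component is
zero: the first component of any `1`-cocycle with values in `Wₙ(O_L)` is a
`1`-coboundary with values in `O_L`. -/
theorem h1_truncation_map_zero
    (p : ℕ) [Fact p.Prime]
    {K L : Type*} [Field K] [Field L] [Algebra K L] [CharP K p]
    (wK : CompleteDiscreteValuation K) (wL : CompleteDiscreteValuation L)
    [IsGalois K L] [FiniteDimensional K L] (hdeg : Module.finrank K L = p)
    (htot : ∀ x : K, wL.v (algebraMap K L x) = p • wK.v x)
    (hGal : ∀ (σ : L ≃ₐ[K] L) (x : L), wL.v (σ x) = wL.v x)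
    (s : ℕ) (hs : IsRamificationBreak K wL s) (hs1 : 1 ≤ s)
    (n : ℕ) (hn : 2 ≤ n)
    (hbig : (s : ℚ) * ((p : ℚ) - 1) / (p : ℚ) *
        (∑ j ∈ Finset.range (n - 2), ((1 : ℚ) / (p : ℚ)) ^ j) > (s : ℚ) - 1) :
    ∀ c : (L ≃ₐ[K] L) → TruncatedWittVector p n wL.integers,
      (∀ σ τ : L ≃ₐ[K] L,
          c (σ * τ) = c σ + TruncatedWittVector.map (wL.galRes hGal σ) (c τ)) →
      ∃ b : wL.integers, ∀ σ : L ≃ₐ[K] L,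
        (c σ).coeff ⟨0, by omega⟩ = wL.galRes hGal σ b - b := by
  intro c hc
  haveI : CharP L p := charP_of_injective_algebraMap (algebraMap K L).injective p
  haveI : CharP wL.integers p :=
    (RingHom.charP_iff (wL.integers.subtype) Subtype.val_injective p).2 inferInstance
  obtain ⟨σ, t, π, u, hst, ht1, hσp, hshift, hπ, hu0, hu, hut⟩ :=
    H1Aux.ram wK wL hdeg htot hGal s hs hs1
  have hsn := H1Aux.bound s n hbig
  set f := wL.galRes hGal σ with hf
  have hc1 : c 1 = 0 := by
    have h := hc 1 1
    have h1 : TruncatedWittVector.map (wL.galRes hGal 1) (c 1) = c 1 := by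
      ext i
      simp [CompleteDiscreteValuation.galRes]
    rw [h1, mul_one] at h
    simpa using h
  have hck : ∀ k : ℕ, c (σ ^ k) = ∑ i ∈ Finset.range k, TruncatedWittVector.map (f ^ i) (c σ) := by
    intro k
    induction k with
    | zero => simpa using hc1
    | succ k ih =>
      rw [pow_succ, hc, ih, Finset.sum_range_succ, hf, H1Aux.galRes_pow]
  have hmain := H1Aux.witt_main (p := p) (H1Aux.filt wL)
    (by
      rw [Ideal.eq_top_iff_one, H1Aux.mem_filt, Subring.coe_one, wL.map_one]
      simp) t f
    (by
      intro a k x hx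
      rw [H1Aux.mem_filt] at *
      rw [hf, H1Aux.galRes_pow]
      change _ ≤ wL.v ((x : L) - (σ ^ k) (x : L))
      rw [← wL.v_neg, neg_sub]
      refine le_trans ?_ (hshift k x)
      have e : (((a + t : ℕ) : ℤ) : WithTop ℤ) = ((a : ℤ) : WithTop ℤ) + ((t : ℤ) : WithTop ℤ) := by
        rw [Nat.cast_add, WithTop.coe_add]
      rw [e]
      exact add_le_add hx le_rfl)
    (fun x d h => H1Aux.filt_pow wL t x d h) (c σ) (by rw [← hck, hσp, hc1]) (n - 1) (by omega)
    ⟨0, by omega⟩ (by simp; omega)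
  have hlt : t < p ^ (n - 1) :=
    lt_of_lt_of_le (by omega : t < p ^ (n - 2))
      (Nat.pow_le_pow_right (Fact.out : p.Prime).pos (by omega))
  rw [Nat.div_eq_of_lt hlt, Nat.sub_zero, H1Aux.mem_filt] at hmain
  obtain ⟨b, hb⟩ := H1Aux.hilbert90 (K := K) (L := L)
    (fun g => (((c g).coeff ⟨0, by omega⟩ : wL.integers) : L))
    (by
      intro g h
      have h1 : (c (g * h)).coeff ⟨0, by omega⟩ = (c g).coeff ⟨0, by omega⟩ +
          wL.galRes hGal g ((c h).coeff ⟨0, by omega⟩) := by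
        rw [hc g h, ← TruncatedWittVector.map_coeff]
        rw [← TruncatedWittVector.truncateFun_out (c g),
          ← TruncatedWittVector.truncateFun_out (TruncatedWittVector.map (wL.galRes hGal g) (c h)),
          ← WittVector.truncateFun_add, WittVector.coeff_truncateFun, WittVector.coeff_truncateFun,
          WittVector.coeff_truncateFun]
        exact WittVector.add_coeff_zero _ _
      simp only [h1]
      rfl)
  have hbσ := hb σ
  rw [hbσ] at hmain
  obtain ⟨k, hk⟩ := H1Aux.descent wK wL hdeg htot σ t ht1 π u hπ hu0 hu hut b hmain
  refine ⟨⟨b - algebraMap K L k, hk⟩, fun g => ?_⟩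
  apply Subtype.ext
  have h1 := hb g
  rw [h1]
  change g b - b = g (b - algebraMap K L k) - (b - algebraMap K L k)
  rw [map_sub, AlgEquiv.commutes]
  ring
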